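/- Let F be a field of characteristic zero, let n ≥ 1, and let R = F[p_1,…,p_n,q_1,…,q_n,t] be the polynomial ring in 2n+1 variables. Let E = Σ_{i=1}^n (p_i·∂/∂p_i + q_i·∂/∂q_i) be the Euler operator in the variables p_i, q_i, let {f,g}_P = Σ_{i=1}^n (∂f/∂p_i · ∂g/∂q_i − ∂f/∂q_i · ∂g/∂p_i), and define the Lagrange bracket {f,g}_L = {f,g}_P + (2−E)(f)·∂g/∂t − ∂f/∂t·(2−E)(g). Then {·,·}_L is F-bilinear, antisymmetric ({f,g}_L = −{g,f}_L), and satisfies the Jacobi identity {f,{g,h}_L}_L = {{f,g}_L,h}_L + {g,{f,h}_L}_L; i.e., {·,·}_L is a Lie bracket on R. -/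

import Mathlib

open MvPolynomial

/-- The Euler operator `E = Σ_i (p_i·∂/∂p_i + q_i·∂/∂q_i)` on
`F[p_1,…,p_n,q_1,…,q_n,t]`, where `p_i` is indexed by `Sum.inl (Sum.inl i)`,
`q_i` by `Sum.inl (Sum.inr i)`, and `t` by `Sum.inr ()`. -/
noncomputable def eulerOp (F : Type*) [Field F] (n : ℕ)
    (f : MvPolynomial ((Fin n ⊕ Fin n) ⊕ Unit) F) :
    MvPolynomial ((Fin n ⊕ Fin n) ⊕ Unit) F :=
  ∑ i : Fin n,
    (X (Sum.inl (Sum.inl i)) * pderiv (Sum.inl (Sum.inl i)) f +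
      X (Sum.inl (Sum.inr i)) * pderiv (Sum.inl (Sum.inr i)) f)

/-- The Poisson part `{f,g}_P = Σ_i (∂f/∂p_i · ∂g/∂q_i − ∂f/∂q_i · ∂g/∂p_i)`. -/
noncomputable def poissonPart (F : Type*) [Field F] (n : ℕ)
    (f g : MvPolynomial ((Fin n ⊕ Fin n) ⊕ Unit) F) :
    MvPolynomial ((Fin n ⊕ Fin n) ⊕ Unit) F :=
  ∑ i : Fin n,
    (pderiv (Sum.inl (Sum.inl i)) f * pderiv (Sum.inl (Sum.inr i)) g -
      pderiv (Sum.inl (Sum.inr i)) f * pderiv (Sum.inl (Sum.inl i)) g)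

/-- The Lagrange bracket
`{f,g}_L = {f,g}_P + (2−E)(f)·∂g/∂t − ∂f/∂t·(2−E)(g)`. -/
noncomputable def lagrangeBracket (F : Type*) [Field F] (n : ℕ)
    (f g : MvPolynomial ((Fin n ⊕ Fin n) ⊕ Unit) F) :
    MvPolynomial ((Fin n ⊕ Fin n) ⊕ Unit) F :=
  poissonPart F n f g +
    (2 * f - eulerOp F n f) * pderiv (Sum.inr ()) g -
    pderiv (Sum.inr ()) f * (2 * g - eulerOp F n g)

/-!
The Poisson bracket `{·,·}_P` has degree `-2` for the Euler grading, so the first-order operator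
`D = 2 - E` satisfies `D {f,g}_P = {D f, g}_P + {f, D g}_P`, as does `T = ∂/∂t`, and `D` and `T`
commute. For any two commuting operators of this kind, `{f,g}_P + D f · T g - T f · D g` satisfies
the Jacobi identity. Indeed `D` fails to be a derivation of products only by the term `D 1 · f · g`;
the resulting terms `D 1 · T f · (D g · T h - T g · D h)` have cyclic sum zero, and likewise with
`D` and `T` exchanged.
-/

section JacobiBracket

variable {R A : Type*} [CommRing R] [CommRing A] [Algebra R A]

/-- A Poisson bracket on the `R`-algebra `A`. The Leibniz rule for products in both arguments is
encoded by taking the bracket to be a derivation `f ↦ {f, ·}` with values in derivations. -/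
structure IsPoissonBracket (P : Derivation R A (Derivation R A A)) : Prop where
  self_eq_zero (f : A) : P f f = 0
  jacobi (f g h : A) : P f (P g h) = P (P f g) h + P g (P f h)

theorem IsPoissonBracket.antisymm {P : Derivation R A (Derivation R A A)}
    (hP : IsPoissonBracket P) (f g : A) : P f g = -P g f := by
  have expanded := hP.self_eq_zero (f + g)
  simp only [map_add, Derivation.add_apply, hP.self_eq_zero] at expanded
  linear_combination expanded

/-- An infinitesimal symmetry of the bracket `P`: a differential operator `D` of order at most one
that satisfies the Leibniz rule for `P`. Such an operator need not annihilate `1`, whence the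
correction term in its Leibniz rule for products. -/
structure IsInfinitesimalSymmetry (P : Derivation R A (Derivation R A A)) (D : A →ₗ[R] A) :
    Prop where
  map_mul (f g : A) : D (f * g) = f * D g + g * D f - D 1 * (f * g)
  map_bracket (f g : A) : D (P f g) = P (D f) g + P f (D g)

theorem IsInfinitesimalSymmetry.smul_id_add {P : Derivation R A (Derivation R A A)}
    {E : Derivation R A A} {c : R}
    (hE : ∀ f g, E (P f g) = P (E f) g + P f (E g) + c • P f g) :
    IsInfinitesimalSymmetry P (c • LinearMap.id + (E : A →ₗ[R] A)) where
  map_mul f g := by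
    simp only [LinearMap.add_apply, LinearMap.smul_apply, LinearMap.id_apply, Derivation.coeFn_coe,
      Derivation.leibniz, Derivation.map_one_eq_zero, smul_eq_mul]
    simp only [Algebra.smul_def]
    ring
  map_bracket f g := by
    simp only [LinearMap.add_apply, LinearMap.smul_apply, LinearMap.id_apply, Derivation.coeFn_coe,
      hE, map_add, Derivation.map_smul, Derivation.add_apply, Derivation.smul_apply]
    abel

theorem IsInfinitesimalSymmetry.of_derivation {P : Derivation R A (Derivation R A A)}
    {T : Derivation R A A} (hT : ∀ f g, T (P f g) = P (T f) g + P f (T g)) :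
    IsInfinitesimalSymmetry P (T : A →ₗ[R] A) := by
  simpa using smul_id_add (P := P) (E := T) (c := 0) (by simpa using hT)

/-- The Jacobi bracket `{f, g} + D f * T g - T f * D g` obtained by adding the bidifferential
operator `D ∧ T` to a bracket `P`. The Lagrange bracket is the case `D = 2 - E`, `T = ∂/∂t`. -/
def jacobiBracket (P : Derivation R A (Derivation R A A)) (D T : A →ₗ[R] A) :
    A →ₗ[R] A →ₗ[R] A :=
  LinearMap.mk₂ R (fun f g => P f g + D f * T g - T f * D g)
    (fun f₁ f₂ g => by simp only [map_add, Derivation.add_apply]; ring)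
    (fun c f g => by simp [smul_add, smul_sub])
    (fun f g₁ g₂ => by simp only [map_add]; ring)
    (fun c f g => by simp [smul_add, smul_sub])

theorem jacobiBracket_apply (P : Derivation R A (Derivation R A A)) (D T : A →ₗ[R] A) (f g : A) :
    jacobiBracket P D T f g = P f g + D f * T g - T f * D g :=
  rfl

theorem IsPoissonBracket.jacobiBracket_isAlt {P : Derivation R A (Derivation R A A)}
    (hP : IsPoissonBracket P) (D T : A →ₗ[R] A) : (jacobiBracket P D T).IsAlt := fun f => by
  rw [jacobiBracket_apply, hP.self_eq_zero]
  ring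

theorem IsInfinitesimalSymmetry.map_jacobiBracket {P : Derivation R A (Derivation R A A)}
    {S D T : A →ₗ[R] A} (hS : IsInfinitesimalSymmetry P S) (hSD : ∀ f, S (D f) = D (S f))
    (hST : ∀ f, S (T f) = T (S f)) (f g : A) :
    S (jacobiBracket P D T f g) =
      jacobiBracket P D T (S f) g + jacobiBracket P D T f (S g) -
        S 1 * (D f * T g - T f * D g) := by
  simp only [jacobiBracket_apply, map_add, map_sub, hS.map_bracket, hS.map_mul, hSD, hST]
  ring

theorem IsPoissonBracket.jacobiBracket_jacobi {P : Derivation R A (Derivation R A A)}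
    (hP : IsPoissonBracket P) {D T : A →ₗ[R] A} (hD : IsInfinitesimalSymmetry P D)
    (hT : IsInfinitesimalSymmetry P T) (hDT : ∀ f, D (T f) = T (D f)) (f g h : A) :
    jacobiBracket P D T f (jacobiBracket P D T g h) =
      jacobiBracket P D T (jacobiBracket P D T f g) h +
        jacobiBracket P D T g (jacobiBracket P D T f h) := by
  have bracket_right (f g h : A) : jacobiBracket P D T f (jacobiBracket P D T g h) =
      P f (jacobiBracket P D T g h) + D f * T (jacobiBracket P D T g h) -
        T f * D (jacobiBracket P D T g h) := rfl
  have bracket_left : jacobiBracket P D T (jacobiBracket P D T f g) h =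
      P (jacobiBracket P D T f g) h + D (jacobiBracket P D T f g) * T h -
        T (jacobiBracket P D T f g) * D h := rfl
  rw [bracket_right f, bracket_right g, bracket_left]
  simp only [hD.map_jacobiBracket (fun _ => rfl) hDT,
    hT.map_jacobiBracket (fun f => (hDT f).symm) (fun _ => rfl)]
  simp only [jacobiBracket_apply, map_add, map_sub, Derivation.add_apply, Derivation.sub_apply,
    Derivation.leibniz, Derivation.smul_apply, smul_eq_mul, hDT]
  linear_combination hP.jacobi f g h - T h * hP.antisymm (D f) g + D h * hP.antisymm (T f) g

end JacobiBracket

section CanonicalPoisson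

variable {R A ι : Type*} [CommRing R] [CommRing A] [Algebra R A]

theorem derivation_sum_apply {M : Type*} [AddCommGroup M] [Module A M] [Module R M]
    (s : Finset ι) (D : ι → Derivation R A M) (a : A) : (∑ i ∈ s, D i) a = ∑ i ∈ s, D i a := by
  rw [← Derivation.coeFnAddMonoidHom_apply, map_sum, Finset.sum_apply]
  rfl

variable [Fintype ι]

/-- The biderivation `{f, g} = ∑ i, (p i f * q i g - q i f * p i g)` attached to two families of
derivations, which play the role of the partial derivatives in canonical coordinates. -/
def canonicalPoisson (p q : ι → Derivation R A A) : Derivation R A (Derivation R A A) :=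
  ∑ i, ((LinearMap.toSpanSingleton A (Derivation R A A) (q i)).compDer (p i) -
    (LinearMap.toSpanSingleton A (Derivation R A A) (p i)).compDer (q i))

theorem canonicalPoisson_apply (p q : ι → Derivation R A A) (f g : A) :
    canonicalPoisson p q f g = ∑ i, (p i f * q i g - q i f * p i g) := by
  simp [canonicalPoisson, derivation_sum_apply]

theorem canonicalPoisson_canonicalPoisson_left (p q : ι → Derivation R A A) (f g h : A) :
    canonicalPoisson p q (canonicalPoisson p q f g) h =
      ∑ i, (p i f * canonicalPoisson p q (q i g) h - q i f * canonicalPoisson p q (p i g) h) -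
        ∑ i, (p i g * canonicalPoisson p q (q i f) h - q i g * canonicalPoisson p q (p i f) h) := by
  rw [canonicalPoisson_apply p q f g, ← Finset.sum_sub_distrib]
  simp only [map_sum, derivation_sum_apply, map_sub, Derivation.sub_apply, Derivation.leibniz,
    Derivation.add_apply, Derivation.smul_apply, smul_eq_mul]
  exact Finset.sum_congr rfl fun i _ => by ring

theorem map_canonicalPoisson {D : Derivation R A A} {p q : ι → Derivation R A A} {a b : ι → R}
    {c : R} (hp : ∀ i, ⁅D, p i⁆ = a i • p i) (hq : ∀ i, ⁅D, q i⁆ = b i • q i)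
    (hab : ∀ i, a i + b i = c) (f g : A) :
    D (canonicalPoisson p q f g) =
      canonicalPoisson p q (D f) g + canonicalPoisson p q f (D g) +
        c • canonicalPoisson p q f g := by
  have D_p (i : ι) (f : A) : D (p i f) = p i (D f) + a i • p i f := by
    rw [← Derivation.smul_apply, ← hp, Derivation.commutator_apply, add_sub_cancel]
  have D_q (i : ι) (f : A) : D (q i f) = q i (D f) + b i • q i f := by
    rw [← Derivation.smul_apply, ← hq, Derivation.commutator_apply, add_sub_cancel]
  simp only [canonicalPoisson_apply, map_sum, Finset.smul_sum, ← Finset.sum_add_distrib]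
  refine Finset.sum_congr rfl fun i _ => ?_
  simp only [map_sub, Derivation.leibniz, D_p, D_q, ← hab i, smul_eq_mul, Algebra.smul_def, map_add]
  ring

theorem map_canonicalPoisson_of_commute {D : Derivation R A A} {p q : ι → Derivation R A A}
    (hp : ∀ i, ⁅D, p i⁆ = 0) (hq : ∀ i, ⁅D, q i⁆ = 0) (f g : A) :
    D (canonicalPoisson p q f g) =
      canonicalPoisson p q (D f) g + canonicalPoisson p q f (D g) := by
  simpa using map_canonicalPoisson (a := fun _ => (0 : R)) (b := fun _ => 0) (c := 0)
    (by simpa using hp) (by simpa using hq) (by simp) f g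

-- The two sides collect the second derivatives of `h` in `{f, {g, h}}` and `{g, {f, h}}`.
theorem canonicalPoisson_secondOrder_symm {p q : ι → Derivation R A A}
    (hpp : ∀ i j, ⁅p i, p j⁆ = 0) (hpq : ∀ i j, ⁅p i, q j⁆ = 0) (hqq : ∀ i j, ⁅q i, q j⁆ = 0)
    (f g h : A) :
    ∑ i, (p i f * canonicalPoisson p q g (q i h) - q i f * canonicalPoisson p q g (p i h)) =
      ∑ i, (p i g * canonicalPoisson p q f (q i h) - q i g * canonicalPoisson p q f (p i h)) := by
  have commute {D₁ D₂ : Derivation R A A} (hD : ⁅D₁, D₂⁆ = 0) (f : A) : D₁ (D₂ f) = D₂ (D₁ f) := by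
    rw [← sub_eq_zero, ← Derivation.commutator_apply, hD, Derivation.zero_apply]
  simp only [canonicalPoisson_apply, Finset.mul_sum, ← Finset.sum_sub_distrib]
  rw [Finset.sum_comm]
  refine Finset.sum_congr rfl fun i _ => Finset.sum_congr rfl fun j _ => ?_
  rw [commute (hpp i j), commute (hqq i j), commute (hpq i j), commute (hpq j i)]
  ring

theorem isPoissonBracket_canonicalPoisson {p q : ι → Derivation R A A}
    (hpp : ∀ i j, ⁅p i, p j⁆ = 0) (hpq : ∀ i j, ⁅p i, q j⁆ = 0) (hqq : ∀ i j, ⁅q i, q j⁆ = 0) :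
    IsPoissonBracket (canonicalPoisson p q) where
  self_eq_zero f := by simp [canonicalPoisson_apply, mul_comm]
  jacobi f g h := by
    have hqp (i j : ι) : ⁅q i, p j⁆ = 0 := by rw [← lie_skew, hpq, neg_zero]
    have p_bracket (i : ι) (f g : A) := map_canonicalPoisson_of_commute (hpp i) (hpq i) f g
    have q_bracket (i : ι) (f g : A) := map_canonicalPoisson_of_commute (hqp i) (hqq i) f g
    have expand_right (f g h : A) :
        canonicalPoisson p q f (canonicalPoisson p q g h) =
          ∑ i, (p i f * canonicalPoisson p q (q i g) h - q i f * canonicalPoisson p q (p i g) h) +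
          ∑ i, (p i f * canonicalPoisson p q g (q i h) -
            q i f * canonicalPoisson p q g (p i h)) := by
      rw [canonicalPoisson_apply, ← Finset.sum_add_distrib]
      simp only [p_bracket, q_bracket]
      exact Finset.sum_congr rfl fun i _ => by ring
    rw [expand_right f, expand_right g, canonicalPoisson_canonicalPoisson_left,
      canonicalPoisson_secondOrder_symm hpp hpq hqq f g h]
    ring

end CanonicalPoisson

section WeightedEuler

variable {R σ : Type*} [CommRing R]

theorem lie_pderiv_pderiv (i j : σ) :
    ⁅pderiv (R := R) i, pderiv (R := R) j⁆ = 0 := by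
  classical
  refine derivation_ext fun k => ?_
  simp [Derivation.commutator_apply, pderiv_X, Pi.single_apply, apply_ite]

/-- The Euler derivation `∑ i, w i • X i * ∂/∂X i` of the grading in which `X i` has weight `w i`.
Prescribing its values on the variables makes sense of it for infinitely many variables. -/
noncomputable def weightedEuler (w : σ → R) :
    Derivation R (MvPolynomial σ R) (MvPolynomial σ R) :=
  mkDerivation R fun i => w i • X i

theorem weightedEuler_X (w : σ → R) (i : σ) : weightedEuler w (X i) = w i • X i :=
  mkDerivation_X R _ i

theorem lie_weightedEuler_pderiv (w : σ → R) (i : σ) :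
    ⁅weightedEuler w, pderiv (R := R) i⁆ = -w i • pderiv (R := R) i := by
  classical
  refine derivation_ext fun k => ?_
  rcases eq_or_ne k i with rfl | hk
  · simp [Derivation.commutator_apply, weightedEuler_X]
  · simp [Derivation.commutator_apply, weightedEuler_X, pderiv_X_of_ne hk]

end WeightedEuler

section ContactBracket

/-- The polynomial ring in the canonical coordinates `p i`, `q i` and the additional variable `t`,
indexed as in `eulerOp`. -/
abbrev ContactPolynomial (R ι : Type*) [CommRing R] : Type _ :=
  MvPolynomial ((ι ⊕ ι) ⊕ Unit) R

variable (R ι : Type*) [CommRing R]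

/-- The Euler derivation in the variables `p i` and `q i`. -/
noncomputable def contactEuler :
    Derivation R (ContactPolynomial R ι) (ContactPolynomial R ι) :=
  weightedEuler (Sum.elim 1 0)

/-- The derivation `∂/∂t`, which is the Reeb field up to the factor in `{1, g}_L = 2 * ∂g/∂t`. -/
noncomputable def contactReeb :
    Derivation R (ContactPolynomial R ι) (ContactPolynomial R ι) :=
  pderiv (Sum.inr ())

/-- The first-order operator `2 - E`, the factor of `∂/∂t` in the Lagrange bracket. -/
noncomputable def twoSubEuler : ContactPolynomial R ι →ₗ[R] ContactPolynomial R ι :=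
  (2 : R) • LinearMap.id + (-contactEuler R ι).toLinearMap

theorem lie_contactEuler_contactReeb : ⁅contactEuler R ι, contactReeb R ι⁆ = 0 := by
  simp [contactEuler, contactReeb, lie_weightedEuler_pderiv]

theorem lie_contactEuler_pderiv (v : ι ⊕ ι) :
    ⁅contactEuler R ι, pderiv (R := R) (σ := (ι ⊕ ι) ⊕ Unit) (Sum.inl v)⁆ =
      (-1 : R) • pderiv (R := R) (Sum.inl v) :=
  lie_weightedEuler_pderiv _ _

theorem twoSubEuler_contactReeb (f : ContactPolynomial R ι) :
    twoSubEuler R ι (contactReeb R ι f) = contactReeb R ι (twoSubEuler R ι f) := by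
  have commute := DFunLike.congr_fun (lie_contactEuler_contactReeb R ι) f
  rw [Derivation.commutator_apply, Derivation.zero_apply, sub_eq_zero] at commute
  simp [twoSubEuler, commute]

variable [Fintype ι]

theorem contactEuler_eq_sum :
    contactEuler R ι =
      ∑ i, ((X (Sum.inl (Sum.inl i)) : ContactPolynomial R ι) • pderiv (Sum.inl (Sum.inl i)) +
        (X (Sum.inl (Sum.inr i)) : ContactPolynomial R ι) • pderiv (Sum.inl (Sum.inr i))) := by
  classical
  refine derivation_ext fun v => ?_
  rcases v with (j | j) | u <;>
    simp [contactEuler, weightedEuler_X, derivation_sum_apply, pderiv_X, Pi.single_apply]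

/-- The Poisson bracket in the variables `p i`, `q i`, for which `t` is a parameter. -/
noncomputable def contactPoisson :
    Derivation R (ContactPolynomial R ι)
      (Derivation R (ContactPolynomial R ι) (ContactPolynomial R ι)) :=
  canonicalPoisson (fun i => pderiv (Sum.inl (Sum.inl i))) (fun i => pderiv (Sum.inl (Sum.inr i)))

theorem isPoissonBracket_contactPoisson : IsPoissonBracket (contactPoisson R ι) :=
  isPoissonBracket_canonicalPoisson (fun _ _ => lie_pderiv_pderiv _ _)
    (fun _ _ => lie_pderiv_pderiv _ _) (fun _ _ => lie_pderiv_pderiv _ _)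

theorem isInfinitesimalSymmetry_contactReeb :
    IsInfinitesimalSymmetry (contactPoisson R ι) (contactReeb R ι).toLinearMap :=
  .of_derivation <| map_canonicalPoisson_of_commute (fun _ => lie_pderiv_pderiv _ _)
    (fun _ => lie_pderiv_pderiv _ _)

theorem contactEuler_contactPoisson (f g : ContactPolynomial R ι) :
    contactEuler R ι (contactPoisson R ι f g) =
      contactPoisson R ι (contactEuler R ι f) g + contactPoisson R ι f (contactEuler R ι g) +
        (-2 : R) • contactPoisson R ι f g :=
  map_canonicalPoisson (fun i => lie_contactEuler_pderiv R ι (Sum.inl i))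
    (fun i => lie_contactEuler_pderiv R ι (Sum.inr i)) (fun _ => by norm_num) f g

theorem isInfinitesimalSymmetry_twoSubEuler :
    IsInfinitesimalSymmetry (contactPoisson R ι) (twoSubEuler R ι) :=
  .smul_id_add fun f g => by
    simp only [Derivation.neg_apply, contactEuler_contactPoisson, map_neg, neg_add, neg_smul,
      neg_neg]

end ContactBracket

section LagrangeBracket

variable (F : Type*) [Field F] (n : ℕ)

theorem contactEuler_apply (f : ContactPolynomial F (Fin n)) :
    contactEuler F (Fin n) f = eulerOp F n f := by
  simp [contactEuler_eq_sum, derivation_sum_apply, eulerOp]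

theorem lagrangeBracket_eq_jacobiBracket (f g : ContactPolynomial F (Fin n)) :
    lagrangeBracket F n f g =
      jacobiBracket (contactPoisson F (Fin n)) (twoSubEuler F (Fin n))
        (contactReeb F (Fin n)) f g := by
  have two_sub_apply (f : ContactPolynomial F (Fin n)) :
      twoSubEuler F (Fin n) f = 2 * f - eulerOp F n f := by
    simp [twoSubEuler, contactEuler_apply, sub_eq_add_neg, two_smul, two_mul]
  rw [jacobiBracket_apply, two_sub_apply, two_sub_apply, contactPoisson, canonicalPoisson_apply]
  rfl

end LagrangeBracket

theorem lagrangeBracket_lie_general (F : Type*) [Field F] (n : ℕ) :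
    (∀ f₁ f₂ g : MvPolynomial ((Fin n ⊕ Fin n) ⊕ Unit) F,
      lagrangeBracket F n (f₁ + f₂) g =
        lagrangeBracket F n f₁ g + lagrangeBracket F n f₂ g) ∧
    (∀ (c : F) (f g : MvPolynomial ((Fin n ⊕ Fin n) ⊕ Unit) F),
      lagrangeBracket F n (c • f) g = c • lagrangeBracket F n f g) ∧
    (∀ f g₁ g₂ : MvPolynomial ((Fin n ⊕ Fin n) ⊕ Unit) F,
      lagrangeBracket F n f (g₁ + g₂) =
        lagrangeBracket F n f g₁ + lagrangeBracket F n f g₂) ∧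
    (∀ (c : F) (f g : MvPolynomial ((Fin n ⊕ Fin n) ⊕ Unit) F),
      lagrangeBracket F n f (c • g) = c • lagrangeBracket F n f g) ∧
    (∀ f g : MvPolynomial ((Fin n ⊕ Fin n) ⊕ Unit) F,
      lagrangeBracket F n f g = - lagrangeBracket F n g f) ∧
    (∀ f g h : MvPolynomial ((Fin n ⊕ Fin n) ⊕ Unit) F,
      lagrangeBracket F n f (lagrangeBracket F n g h) =
        lagrangeBracket F n (lagrangeBracket F n f g) h +
          lagrangeBracket F n g (lagrangeBracket F n f h)) := by
  simp only [lagrangeBracket_eq_jacobiBracket]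
  have poisson := isPoissonBracket_contactPoisson F (Fin n)
  have alt := poisson.jacobiBracket_isAlt (twoSubEuler F (Fin n)) (contactReeb F (Fin n))
  have jacobi := poisson.jacobiBracket_jacobi (isInfinitesimalSymmetry_twoSubEuler F (Fin n))
    (isInfinitesimalSymmetry_contactReeb F (Fin n)) (twoSubEuler_contactReeb F (Fin n))
  exact ⟨LinearMap.map_add₂ _, LinearMap.map_smul₂ _, fun f => map_add _, fun c f => map_smul _ c,
    fun f g => (alt.neg g f).symm, jacobi⟩

/-- The Lagrange bracket is F-bilinear, antisymmetric and satisfies the Jacobi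
identity: it is a Lie bracket on `F[p_1,…,p_n,q_1,…,q_n,t]`. -/
theorem lagrangeBracket_lie (F : Type*) [Field F] [CharZero F]
    (n : ℕ) (hn : 1 ≤ n) :
    (∀ f₁ f₂ g : MvPolynomial ((Fin n ⊕ Fin n) ⊕ Unit) F,
      lagrangeBracket F n (f₁ + f₂) g =
        lagrangeBracket F n f₁ g + lagrangeBracket F n f₂ g) ∧
    (∀ (c : F) (f g : MvPolynomial ((Fin n ⊕ Fin n) ⊕ Unit) F),
      lagrangeBracket F n (c • f) g = c • lagrangeBracket F n f g) ∧
    (∀ f g₁ g₂ : MvPolynomial ((Fin n ⊕ Fin n) ⊕ Unit) F,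
      lagrangeBracket F n f (g₁ + g₂) =
        lagrangeBracket F n f g₁ + lagrangeBracket F n f g₂) ∧
    (∀ (c : F) (f g : MvPolynomial ((Fin n ⊕ Fin n) ⊕ Unit) F),
      lagrangeBracket F n f (c • g) = c • lagrangeBracket F n f g) ∧
    (∀ f g : MvPolynomial ((Fin n ⊕ Fin n) ⊕ Unit) F,
      lagrangeBracket F n f g = - lagrangeBracket F n g f) ∧
    (∀ f g h : MvPolynomial ((Fin n ⊕ Fin n) ⊕ Unit) F,
      lagrangeBracket F n f (lagrangeBracket F n g h) =
        lagrangeBracket F n (lagrangeBracket F n f g) h +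
          lagrangeBracket F n g (lagrangeBracket F n f h)) :=
  lagrangeBracket_lie_general F n
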